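/- Let r > 1, fix j ∈ {1,2}, sublattice labels α₁ ∈ 𝓐₁, α₂ ∈ 𝓐₂ and γ_{3−j} ∈ Γ_{3−j}. Assume u_k(·, α_k) ∈ L^∞(ℝ²; ℝ³) for k = 1,2 and f ∈ L^∞_{2r}(ℝ² × [−L_u^z, L_u^z]). Then ∫_{ℝ²} |f(x + g_{j,α,γ_{3−j}}(x))| dx ≤ (5^{r−1} π / (r−1)) · (1 + d_{𝓐₁,𝓐₂} + ‖u₁‖_∞ + ‖u₂‖_∞)^{2r} · ‖⟨·⟩^{2r} f‖_{L^∞(ℝ² × [−L_u^z, L_u^z])}. -/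

import Mathlib

open scoped Real BigOperators
open MeasureTheory Filter Topology Matrix

noncomputable section

/-- The 2×2 rotation matrix through angle `φ`. -/
def Rot (φ : ℝ) : Matrix (Fin 2) (Fin 2) ℝ :=
  !![Real.cos φ, -Real.sin φ; Real.sin φ, Real.cos φ]

/-- Euclidean norm on `ℝ²`. -/
def norm2 (v : Fin 2 → ℝ) : ℝ := Real.sqrt (v 0 ^ 2 + v 1 ^ 2)

/-- Euclidean norm on `ℝ³`. -/
def norm3 (v : Fin 3 → ℝ) : ℝ := Real.sqrt (v 0 ^ 2 + v 1 ^ 2 + v 2 ^ 2)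

/-- Cast an integer vector to a real vector. -/
def iv (n : Fin 2 → ℤ) : Fin 2 → ℝ := fun i => (n i : ℝ)

/-- The lattice `M ℤ²`. -/
def lat (M : Matrix (Fin 2) (Fin 2) ℝ) : Set (Fin 2 → ℝ) :=
  {v | ∃ n : Fin 2 → ℤ, v = M.mulVec (iv n)}

/-- The unit cell `M [0,1)²`. -/
def cell (M : Matrix (Fin 2) (Fin 2) ℝ) : Set (Fin 2 → ℝ) :=
  {v | ∃ t : Fin 2 → ℝ, (∀ i, t i ∈ Set.Ico (0 : ℝ) 1) ∧ v = M.mulVec t}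

/-- The reciprocal matrix `2π M⁻ᵀ`. -/
def recip (M : Matrix (Fin 2) (Fin 2) ℝ) : Matrix (Fin 2) (Fin 2) ℝ :=
  (2 * π) • (M⁻¹)ᵀ

/-- A pair of lattices with reciprocal-lattice matrices `B1`, `B2` is incommensurate iff
`G₁ + G₂ = 0` with `G_k` in the respective reciprocal lattice implies `G₁ = G₂ = 0`. -/
def Incommensurate (B1 B2 : Matrix (Fin 2) (Fin 2) ℝ) : Prop :=
  ∀ G1 ∈ lat B1, ∀ G2 ∈ lat B2, G1 + G2 = 0 → G1 = 0 ∧ G2 = 0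

/-- Euclidean distance from `v ∈ ℝ²` to the integer lattice `ℤ²`. -/
def distZ2 (v : Fin 2 → ℝ) : ℝ := ⨅ m : Fin 2 → ℤ, norm2 (v - iv m)

/-- `θ` is a `(q,K,σ)`-Diophantine 2D rotation. -/
def IsDiophantine (A : Matrix (Fin 2) (Fin 2) ℝ) (q K σ θ : ℝ) : Prop :=
  ∀ n : Fin 2 → ℤ, n ≠ 0 →
    K / norm2 (iv n) ^ (2 * σ) ≤ distZ2 ((q • (Aᵀ * Rot θ * (A⁻¹)ᵀ)).mulVec (iv n)) ∧
    K / norm2 (iv n) ^ (2 * σ) ≤ distZ2 ((q⁻¹ • (Aᵀ * Rot (-θ) * (A⁻¹)ᵀ)).mulVec (iv n))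

/-- The moiré length scale ratio `ρ_𝓜`. -/
def rhoM (q θ : ℝ) : ℝ :=
  (Real.sqrt ((Real.sqrt q - (Real.sqrt q)⁻¹) ^ 2 + 4 * Real.sin (θ / 2) ^ 2))⁻¹

/-- Riemann zeta function (for real `s > 1`, via its Dirichlet series). -/
def zetaR (s : ℝ) : ℝ := ∑' n : ℕ, ((n : ℝ) + 1) ^ (-s)

/-- Operator (spectral) norm of a 2×2 real matrix w.r.t. the Euclidean norm. -/
def opNorm2 (M : Matrix (Fin 2) (Fin 2) ℝ) : ℝ :=
  ⨆ x : {x : Fin 2 → ℝ // norm2 x ≤ 1}, norm2 (M.mulVec x.1)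

/-- Embedding `ℝ² ↪ ℝ³`, `x ↦ (x, 0)`. -/
def emb (x : Fin 2 → ℝ) : Fin 3 → ℝ := ![x 0, x 1, 0]

/-- Japanese bracket `⟨x⟩ = (1 + |x|²)^{1/2}` on `ℝ³`. -/
def jap3 (x : Fin 3 → ℝ) : ℝ := Real.sqrt (1 + norm3 x ^ 2)

/-- The region `ℝ² × [−L, L] ⊆ ℝ³`. -/
def slab (L : ℝ) : Set (Fin 3 → ℝ) := {x | x 2 ∈ Set.Icc (-L) L}

/-- Euclidean inner product on `ℝ²`. -/
def dot2 (a b : Fin 2 → ℝ) : ℝ := ∑ i, a i * b i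

/-- The index box `⟦−N, N⟧²`. -/
def box (N : ℕ) : Finset (Fin 2 → ℤ) :=
  Finset.Icc (fun _ => -(N : ℤ)) (fun _ => (N : ℤ))

/-- The normalized Dirichlet kernel `Δ_N^j` of the lattice `A_j ℤ²`. -/
def Dir (Aj : Matrix (Fin 2) (Fin 2) ℝ) (N : ℕ) (G : Fin 2 → ℝ) : ℂ :=
  (((2 * N + 1 : ℝ)) ^ 2)⁻¹ •
    ∑ n ∈ box N, Complex.exp (Complex.I * (dot2 G (Aj.mulVec (iv n)) : ℝ))

/-!
The argument is Peetre's inequality: `1 + ‖x‖² ≤ (1 + ‖y‖)² (1 + ‖x + y‖²)` trades the weight at the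
shifted point `x + y` for the weight at `x`, at the cost of a power of the size of the shift. The
shifted potential is therefore dominated by a multiple of `(1 + |x|²)⁻ʳ`, whose integral over the
plane is `π / (r - 1)`.
-/

lemma le_ciSup_ciSup_of_forall_le {ι κ β : Type*} [ConditionallyCompleteLattice β] {F : ι → κ → β}
    {C : β} (hC : ∀ i k, F i k ≤ C) (i : ι) (k : κ) : F i k ≤ ⨆ i, ⨆ k, F i k := by
  have : Nonempty κ := ⟨k⟩
  have bdd_inner : BddAbove (Set.range (F i)) := ⟨C, Set.forall_mem_range.2 (hC i)⟩
  have bdd_outer : BddAbove (Set.range fun i ↦ ⨆ k, F i k) :=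
    ⟨C, Set.forall_mem_range.2 fun j ↦ ciSup_le (hC j)⟩
  exact (le_ciSup bdd_inner k).trans (le_ciSup bdd_outer i)

lemma ofReal_le_ofReal_mul_of_one_le {c : ℝ} (hc : 1 ≤ c) (x : ℝ) :
    ENNReal.ofReal x ≤ ENNReal.ofReal (c * x) := by
  rw [ENNReal.ofReal_mul (by linarith)]
  exact le_mul_of_one_le_left' (ENNReal.one_le_ofReal.2 hc)

section PeetreInequality

variable {E : Type*} [SeminormedAddCommGroup E]

lemma one_add_norm_sq_le_mul_one_add_norm_add_sq (x y : E) :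
    1 + ‖x‖ ^ 2 ≤ (1 + ‖y‖) ^ 2 * (1 + ‖x + y‖ ^ 2) := by
  have triangle : ‖x‖ ≤ ‖x + y‖ + ‖y‖ := by simpa using norm_sub_le (x + y) y
  calc 1 + ‖x‖ ^ 2 ≤ 1 + (‖x + y‖ + ‖y‖) ^ 2 := by gcongr
    _ ≤ (1 + ‖y‖) ^ 2 * (1 + ‖x + y‖ ^ 2) := by
      nlinarith [mul_nonneg (norm_nonneg y) (sq_nonneg (‖x + y‖ - 1)),
        mul_nonneg (norm_nonneg y) (sq_nonneg ‖x + y‖), sq_nonneg (‖y‖ * ‖x + y‖)]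

lemma one_add_norm_sq_rpow_le {r : ℝ} (hr : 0 ≤ r) (x y : E) :
    (1 + ‖x‖ ^ 2) ^ r ≤ (1 + ‖y‖) ^ (2 * r) * (1 + ‖x + y‖ ^ 2) ^ r := by
  rw [Real.rpow_mul (by positivity), Real.rpow_two,
    ← Real.mul_rpow (by positivity) (by positivity)]
  gcongr
  exact one_add_norm_sq_le_mul_one_add_norm_add_sq x y

lemma le_mul_one_add_norm_sq_rpow_neg_of_shifted_weight_mul_le {r S M a : ℝ} (hr : 0 ≤ r) {x y : E}
    (hy : ‖y‖ ≤ S) (ha : 0 ≤ a) (haM : (1 + ‖x + y‖ ^ 2) ^ r * a ≤ M) :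
    a ≤ (1 + S) ^ (2 * r) * M * (1 + ‖x‖ ^ 2) ^ (-r) := by
  have hM : 0 ≤ M := le_trans (by positivity) haM
  rw [Real.rpow_neg (by positivity), ← div_eq_mul_inv, le_div_iff₀ (by positivity)]
  calc a * (1 + ‖x‖ ^ 2) ^ r
      ≤ a * ((1 + ‖y‖) ^ (2 * r) * (1 + ‖x + y‖ ^ 2) ^ r) := by
        gcongr
        exact one_add_norm_sq_rpow_le hr x y
    _ = (1 + ‖y‖) ^ (2 * r) * ((1 + ‖x + y‖ ^ 2) ^ r * a) := by ring
    _ ≤ (1 + ‖y‖) ^ (2 * r) * M := by gcongr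
    _ ≤ (1 + S) ^ (2 * r) * M := by gcongr

end PeetreInequality

section PlaneIntegral

variable {r : ℝ}

lemma hasDerivAt_one_add_sq_rpow_one_sub_div (hr : r ≠ 1) (t : ℝ) :
    HasDerivAt (fun t : ℝ ↦ (1 + t ^ 2) ^ (1 - r) / (2 * (1 - r))) (t * (1 + t ^ 2) ^ (-r)) t := by
  have inner_deriv : HasDerivAt (fun t : ℝ ↦ 1 + t ^ 2) (2 * t) t := by
    simpa using (hasDerivAt_pow 2 t).const_add 1
  have hr' : 1 - r ≠ 0 := sub_ne_zero.2 hr.symm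
  refine ((inner_deriv.rpow_const (p := 1 - r) (Or.inl (by positivity))).div_const
    (2 * (1 - r))).congr_deriv ?_
  rw [show 1 - r - 1 = -r by ring]
  field_simp

lemma tendsto_one_add_sq_rpow_one_sub_div_atTop (hr : 1 < r) :
    Tendsto (fun t : ℝ ↦ (1 + t ^ 2) ^ (1 - r) / (2 * (1 - r))) atTop (𝓝 0) := by
  have inner_atTop : Tendsto (fun t : ℝ ↦ 1 + t ^ 2) atTop atTop :=
    tendsto_atTop_add_const_left _ _ (tendsto_pow_atTop two_ne_zero)
  simpa [Function.comp_def] using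
    ((tendsto_rpow_neg_atTop (sub_pos.2 hr)).comp inner_atTop).div_const (2 * (1 - r))

lemma integral_Ioi_mul_one_add_sq_rpow_neg (hr : 1 < r) :
    ∫ t in Set.Ioi (0 : ℝ), t * (1 + t ^ 2) ^ (-r) = 1 / (2 * (r - 1)) := by
  rw [integral_Ioi_of_hasDerivAt_of_nonneg'
    (fun t _ ↦ hasDerivAt_one_add_sq_rpow_one_sub_div hr.ne' t)
    (fun t ht ↦ mul_nonneg (Set.mem_Ioi.1 ht).le (by positivity))
    (tendsto_one_add_sq_rpow_one_sub_div_atTop hr), zero_pow two_ne_zero, add_zero, Real.one_rpow,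
    zero_sub, ← div_neg, ← mul_neg, neg_sub]

variable {E : Type*} [NormedAddCommGroup E] [InnerProductSpace ℝ E] [FiniteDimensional ℝ E]
  [MeasurableSpace E] [BorelSpace E]

lemma integral_one_add_norm_sq_rpow_neg_of_finrank_eq_two (hE : Module.finrank ℝ E = 2)
    (hr : 1 < r) : ∫ x : E, (1 + ‖x‖ ^ 2) ^ (-r) = π / (r - 1) := by
  have : Nontrivial E := Module.nontrivial_of_finrank_pos (R := ℝ) (by lia)
  have ball_volume : (volume : Measure E).real (Metric.ball 0 1) = π := by
    simp [Measure.real, InnerProductSpace.volume_ball_of_dim_even (k := 1) hE, Real.pi_nonneg]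
  have hr' : r - 1 ≠ 0 := (sub_pos.2 hr).ne'
  rw [integral_fun_norm_addHaar volume (fun t : ℝ ↦ (1 + t ^ 2) ^ (-r)), hE, ball_volume]
  simp only [Nat.add_one_sub_one, pow_one, smul_eq_mul, integral_Ioi_mul_one_add_sq_rpow_neg hr,
    nsmul_eq_mul, Nat.cast_ofNat]
  field_simp

lemma lintegral_one_add_norm_sq_rpow_neg_of_finrank_eq_two (hE : Module.finrank ℝ E = 2)
    (hr : 1 < r) :
    ∫⁻ x : E, ENNReal.ofReal ((1 + ‖x‖ ^ 2) ^ (-r)) = ENNReal.ofReal (π / (r - 1)) := by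
  have decay : (Module.finrank ℝ E : ℝ) < 2 * r := by rw [hE]; push_cast; linarith
  have integrable : Integrable fun x : E ↦ (1 + ‖x‖ ^ 2) ^ (-r) := by
    simpa [neg_div] using integrable_rpow_neg_one_add_norm_sq (μ := volume) decay
  rw [← integral_one_add_norm_sq_rpow_neg_of_finrank_eq_two hE hr,
    ofReal_integral_eq_lintegral_ofReal integrable (ae_of_all _ fun x ↦ by positivity)]

end PlaneIntegral

section CoordinateNorms

lemma norm2_eq_norm_toLp (v : Fin 2 → ℝ) : norm2 v = ‖WithLp.toLp 2 v‖ := by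
  simp [norm2, EuclideanSpace.norm_eq]

lemma norm3_eq_norm_toLp (v : Fin 3 → ℝ) : norm3 v = ‖WithLp.toLp 2 v‖ := by
  simp [norm3, EuclideanSpace.norm_eq, Fin.sum_univ_three]

lemma norm2_nonneg (v : Fin 2 → ℝ) : 0 ≤ norm2 v := Real.sqrt_nonneg _

lemma norm3_nonneg (v : Fin 3 → ℝ) : 0 ≤ norm3 v := Real.sqrt_nonneg _

lemma norm3_add_le (v w : Fin 3 → ℝ) : norm3 (v + w) ≤ norm3 v + norm3 w := by
  simpa only [norm3_eq_norm_toLp, WithLp.toLp_add] using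
    norm_add_le (WithLp.toLp 2 v) (WithLp.toLp 2 w)

lemma norm3_sub_le (v w : Fin 3 → ℝ) : norm3 (v - w) ≤ norm3 v + norm3 w := by
  simpa only [norm3_eq_norm_toLp, WithLp.toLp_sub] using
    norm_sub_le (WithLp.toLp 2 v) (WithLp.toLp 2 w)

lemma abs_apply_two_le_norm3 (v : Fin 3 → ℝ) : |v 2| ≤ norm3 v := by
  simpa only [norm3_eq_norm_toLp, Real.norm_eq_abs] using PiLp.norm_apply_le (WithLp.toLp 2 v) 2

@[simp] lemma emb_apply_two (v : Fin 2 → ℝ) : emb v 2 = 0 := rfl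

lemma emb_sub (v w : Fin 2 → ℝ) : emb (v - w) = emb v - emb w := by
  simp [emb]

lemma norm3_emb (v : Fin 2 → ℝ) : norm3 (emb v) = norm2 v := by
  simp [norm3, norm2, emb]

lemma jap3_rpow_two_mul (v : Fin 3 → ℝ) (r : ℝ) : jap3 v ^ (2 * r) = (1 + norm3 v ^ 2) ^ r := by
  rw [jap3, Real.rpow_mul (Real.sqrt_nonneg _), Real.rpow_two, Real.sq_sqrt (by positivity)]

end CoordinateNorms

section ShiftedPotential

variable {r : ℝ}

lemma lintegral_one_add_norm2_sq_rpow_neg (hr : 1 < r) :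
    ∫⁻ x : Fin 2 → ℝ, ENNReal.ofReal ((1 + norm2 x ^ 2) ^ (-r)) = ENNReal.ofReal (π / (r - 1)) := by
  simp only [norm2_eq_norm_toLp]
  rw [(PiLp.volume_preserving_toLp (Fin 2)).lintegral_comp_emb
    (MeasurableEquiv.toLp 2 (Fin 2 → ℝ)).measurableEmbedding
    fun x : EuclideanSpace ℝ (Fin 2) ↦ ENNReal.ofReal ((1 + ‖x‖ ^ 2) ^ (-r))]
  exact lintegral_one_add_norm_sq_rpow_neg_of_finrank_eq_two finrank_euclideanSpace_fin hr

lemma abs_le_of_jap3_mul_abs_le {S M a : ℝ} (hr : 0 ≤ r) (x : Fin 2 → ℝ) {g : Fin 3 → ℝ}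
    (hg : norm3 g ≤ S) (haM : jap3 (emb x + g) ^ (2 * r) * |a| ≤ M) :
    |a| ≤ (1 + S) ^ (2 * r) * M * (1 + norm2 x ^ 2) ^ (-r) := by
  rw [norm3_eq_norm_toLp] at hg
  rw [jap3_rpow_two_mul, norm3_eq_norm_toLp, WithLp.toLp_add] at haM
  rw [← norm3_emb, norm3_eq_norm_toLp]
  exact le_mul_one_add_norm_sq_rpow_neg_of_shifted_weight_mul_le hr hg (abs_nonneg a) haM

lemma lintegral_abs_emb_add_le {S L M : ℝ} (hr : 1 < r) {g : (Fin 2 → ℝ) → Fin 3 → ℝ}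
    (hgS : ∀ x, norm3 (g x) ≤ S) (hgL : ∀ x, |g x 2| ≤ L) {f : (Fin 3 → ℝ) → ℝ}
    (hf : ∀ y ∈ slab L, jap3 y ^ (2 * r) * |f y| ≤ M) :
    ∫⁻ x, ENNReal.ofReal |f (emb x + g x)| ≤
      ENNReal.ofReal (π / (r - 1) * (1 + S) ^ (2 * r) * M) := by
  have mem_slab (x) : emb x + g x ∈ slab L := by simpa [slab] using abs_le.1 (hgL x)
  have hM : 0 ≤ M := le_trans
    (mul_nonneg (Real.rpow_nonneg (Real.sqrt_nonneg _) _) (abs_nonneg _)) (hf _ (mem_slab 0))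
  have hS : 0 ≤ S := (norm3_nonneg _).trans (hgS 0)
  calc ∫⁻ x, ENNReal.ofReal |f (emb x + g x)|
      ≤ ∫⁻ x, ENNReal.ofReal ((1 + S) ^ (2 * r) * M) *
          ENNReal.ofReal ((1 + norm2 x ^ 2) ^ (-r)) := by
        refine lintegral_mono fun x ↦ ?_
        rw [← ENNReal.ofReal_mul (by positivity)]
        exact ENNReal.ofReal_le_ofReal <|
          abs_le_of_jap3_mul_abs_le (by linarith) x (hgS x) (hf _ (mem_slab x))
    _ = ENNReal.ofReal (π / (r - 1) * (1 + S) ^ (2 * r) * M) := by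
        rw [lintegral_const_mul' _ _ ENNReal.ofReal_ne_top,
          lintegral_one_add_norm2_sq_rpow_neg hr, ← ENNReal.ofReal_mul (by positivity)]
        congr 1
        ring

lemma norm3_emb_sub_emb_add_sub_le (s t : Fin 2 → ℝ) (v w : Fin 3 → ℝ) :
    norm3 (emb s - emb t + v - w) ≤ norm2 (s - t) + norm3 v + norm3 w := by
  rw [← emb_sub, ← norm3_emb]
  exact (norm3_sub_le _ _).trans (by gcongr; exact norm3_add_le _ _)

lemma abs_emb_sub_emb_add_sub_apply_two_le (s t : Fin 2 → ℝ) (v w : Fin 3 → ℝ) :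
    |(emb s - emb t + v - w) 2| ≤ |v 2| + |w 2| := by
  simpa using abs_sub (v 2) (w 2)

theorem shifted_potential_L1_bound_general (hr : 1 < r) {𝓐a 𝓐b Xa Xb : Type*}
    {τa : 𝓐a → Fin 2 → ℝ} {τb : 𝓐b → Fin 2 → ℝ}
    (hτ : BddAbove (Set.range fun α : 𝓐a × 𝓐b ↦ norm2 (τa α.1 - τb α.2)))
    {ua : Xa → 𝓐a → Fin 3 → ℝ} {ub : Xb → 𝓐b → Fin 3 → ℝ}
    (hua : ∃ C : ℝ, ∀ x α, norm3 (ua x α) ≤ C) (hub : ∃ C : ℝ, ∀ x α, norm3 (ub x α) ≤ C)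
    (αa : 𝓐a) (αb : 𝓐b) (ya : (Fin 2 → ℝ) → Xa) (yb : (Fin 2 → ℝ) → Xb)
    {f : (Fin 3 → ℝ) → ℝ}
    (hf : BddAbove (Set.range fun x : ↥(slab
        ((⨆ α1, ⨆ α2, norm2 (τa α1 - τb α2)) + (⨆ x, ⨆ α, |ua x α 2|) +
          (⨆ x, ⨆ α, |ub x α 2|))) ↦
      jap3 x.1 ^ (2 * r) * |f x.1|)) :
    ∫⁻ x, ENNReal.ofReal
        |f (emb x + (emb (τa αa) - emb (τb αb) + ua (ya x) αa - ub (yb x) αb))| ≤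
      ENNReal.ofReal
        (π / (r - 1) *
          (1 + (⨆ α1, ⨆ α2, norm2 (τa α1 - τb α2)) + (⨆ x, ⨆ α, norm3 (ua x α)) +
            (⨆ x, ⨆ α, norm3 (ub x α))) ^ (2 * r) *
          (⨆ x : ↥(slab
              ((⨆ α1, ⨆ α2, norm2 (τa α1 - τb α2)) + (⨆ x, ⨆ α, |ua x α 2|) +
                (⨆ x, ⨆ α, |ub x α 2|))),
            jap3 x.1 ^ (2 * r) * |f x.1|)) := by
  obtain ⟨Cτ, hCτ⟩ := hτ
  obtain ⟨Ca, hCa⟩ := hua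
  obtain ⟨Cb, hCb⟩ := hub
  have shift_le := le_ciSup_ciSup_of_forall_le (fun α1 α2 ↦ hCτ ⟨(α1, α2), rfl⟩) αa αb
  have ua_le := le_ciSup_ciSup_of_forall_le hCa
  have ub_le := le_ciSup_ciSup_of_forall_le hCb
  have uaz_le := le_ciSup_ciSup_of_forall_le fun x α ↦
    (abs_apply_two_le_norm3 (ua x α)).trans (hCa x α)
  have ubz_le := le_ciSup_ciSup_of_forall_le fun x α ↦
    (abs_apply_two_le_norm3 (ub x α)).trans (hCb x α)
  simp only [add_assoc (1 : ℝ)]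
  refine lintegral_abs_emb_add_le hr (fun x ↦ ?_) (fun x ↦ ?_) fun y hy ↦ le_ciSup hf ⟨y, hy⟩
  · exact (norm3_emb_sub_emb_add_sub_le _ _ _ _).trans <|
      add_le_add (add_le_add shift_le (ua_le _ _)) (ub_le _ _)
  · refine (abs_emb_sub_emb_add_sub_apply_two_le _ _ _ _).trans <|
      add_le_add ?_ (ubz_le _ _)
    exact (uaz_le _ _).trans (le_add_of_nonneg_left ((norm2_nonneg _).trans shift_le))

end ShiftedPotential

/-- Lemma: integrability bound for shifted weighted potentials.
Layer `a` plays the role of layer `j`, layer `b` the role of layer `3−j`. -/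
theorem shifted_potential_L1_bound (θ q r : ℝ) (hq : 0 < q) (hr : 1 < r)
    (A A1 A2 : Matrix (Fin 2) (Fin 2) ℝ)
    (hA : IsUnit A.det)
    (hA1 : A1 = (Real.sqrt q)⁻¹ • (Rot (-(θ / 2)) * A))
    (hA2 : A2 = Real.sqrt q • (Rot (θ / 2) * A))
    (Aa Ab Dj : Matrix (Fin 2) (Fin 2) ℝ)
    (hcase : (Aa = A1 ∧ Ab = A2) ∨ (Aa = A2 ∧ Ab = A1))
    (hDj : Dj = 1 - Ab * Aa⁻¹) (hDjinv : IsUnit Dj.det)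
    (𝓐a 𝓐b : Type) [Fintype 𝓐a] [Fintype 𝓐b] [Nonempty 𝓐a] [Nonempty 𝓐b]
    (τa : 𝓐a → Fin 2 → ℝ) (τb : 𝓐b → Fin 2 → ℝ)
    (ua : (Fin 2 → ℝ) → 𝓐a → Fin 3 → ℝ) (ub : (Fin 2 → ℝ) → 𝓐b → Fin 3 → ℝ)
    -- u₁, u₂ ∈ L^∞
    (hua : ∃ C : ℝ, ∀ x α, norm3 (ua x α) ≤ C)
    (hub : ∃ C : ℝ, ∀ x α, norm3 (ub x α) ≤ C)
    (αa : 𝓐a) (αb : 𝓐b) (γb : Fin 2 → ℝ) (hγb : γb ∈ cell Ab)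
    (f : (Fin 3 → ℝ) → ℝ)
    -- f ∈ L^∞_{2r}(ℝ² × [−L_u^z, L_u^z])
    (hf : BddAbove (Set.range fun x : ↥(slab
        ((⨆ α1 : 𝓐a, ⨆ α2 : 𝓐b, norm2 (τa α1 - τb α2)) +
          (⨆ x : Fin 2 → ℝ, ⨆ α : 𝓐a, |ua x α 2|) +
          (⨆ x : Fin 2 → ℝ, ⨆ α : 𝓐b, |ub x α 2|))) =>
      jap3 x.1 ^ (2 * r) * |f x.1|)) :
    ∫⁻ x : Fin 2 → ℝ,
        ENNReal.ofReal
          |f (emb x +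
            (emb (τa αa) - emb (τb αb) +
              ua (Dj⁻¹.mulVec (x + γb)) αa -
              ub (Dj⁻¹.mulVec (x + γb) - x) αb))| ≤
      ENNReal.ofReal
        ((5 : ℝ) ^ (r - 1) * π / (r - 1) *
          (1 + (⨆ α1 : 𝓐a, ⨆ α2 : 𝓐b, norm2 (τa α1 - τb α2)) +
            (⨆ x : Fin 2 → ℝ, ⨆ α : 𝓐a, norm3 (ua x α)) +
            (⨆ x : Fin 2 → ℝ, ⨆ α : 𝓐b, norm3 (ub x α))) ^ (2 * r) *
          (⨆ x : ↥(slab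
              ((⨆ α1 : 𝓐a, ⨆ α2 : 𝓐b, norm2 (τa α1 - τb α2)) +
                (⨆ x : Fin 2 → ℝ, ⨆ α : 𝓐a, |ua x α 2|) +
                (⨆ x : Fin 2 → ℝ, ⨆ α : 𝓐b, |ub x α 2|))),
            jap3 x.1 ^ (2 * r) * |f x.1|)) := by
  refine (shifted_potential_L1_bound_general hr (Set.finite_range _).bddAbove hua hub αa αb
    (fun x ↦ Dj⁻¹.mulVec (x + γb)) (fun x ↦ Dj⁻¹.mulVec (x + γb) - x) hf).trans ?_
  simpa only [mul_assoc, mul_div_assoc] using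
    ofReal_le_ofReal_mul_of_one_le (Real.one_le_rpow (by norm_num) (sub_nonneg.2 hr.le)) _

end
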